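/- Let $X$ be a smooth complete intersection of $k_1 \ge 0$ quadrics and $k_2 \ge 1$ cubics in $\mathbb{P}^N$ with $i_X = N + 1 - 2k_1 - 3k_2$ positive and divisible by 3, and set $p = i_X/3$. Then $h^{p,n-p}_{pr}(X) = \binom{(N - 2k_1 - 2)/3}{k_2 - 1}$; in particular this equals 1 if and only if $k_2 = 1$. -/

import Mathlib

open MvPolynomial


lemma aux_finrank (k p : ℕ) (hk : 1 ≤ k) :
    Module.finrank ℂ (homogeneousSubmodule (Fin k) ℂ p) = Nat.choose (p + k - 1) (k - 1) := by
  rw [homogeneousSubmodule_eq_finsupp_supported]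
  rw [(AddMonoidAlgebra.supportedEquivFinsupp (R := ℂ) (S := ℂ)
    {d : Fin k →₀ ℕ | d.degree = p}).finrank_eq]
  have e : {d : Fin k →₀ ℕ | d.degree = p} ≃ Sym (Fin k) p := (Sym.equivNatSum (Fin k) p).symm
  let _ : Fintype {d : Fin k →₀ ℕ | d.degree = p} := Fintype.ofEquiv _ e.symm
  rw [Module.finrank_finsupp_self, Fintype.card_congr e, Sym.card_sym_eq_choose, Fintype.card_fin,
    add_comm k p]
  exact Nat.choose_symm_of_eq_add (by omega)

noncomputable def auxPi (N k1 k2 : ℕ) :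
    MvPolynomial (Fin (N + 1) ⊕ Fin (k1 + k2)) ℂ →ₐ[ℂ] MvPolynomial (Fin k2) ℂ :=
  aeval (Sum.elim (fun _ => 0) (Fin.addCases (fun _ => 0) (fun j => X j)))

lemma auxPi_inl (N k1 k2 n : ℕ) (hn : n ≠ 0) (g : MvPolynomial (Fin (N + 1)) ℂ)
    (hg : g.IsHomogeneous n) : auxPi N k1 k2 (rename Sum.inl g) = 0 := by
  have h0 : coeff 0 g = 0 := hg.coeff_eq_zero (by simpa using hn.symm)
  have h1 : (Sum.elim (fun _ => 0) (Fin.addCases (fun _ => 0) (fun j => X j)) :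
      Fin (N + 1) ⊕ Fin (k1 + k2) → MvPolynomial (Fin k2) ℂ) ∘ Sum.inl = fun _ => 0 := by
    ext1 x; rfl
  rw [auxPi, aeval_rename, h1, aeval_zero', constantCoeff_eq, h0, map_zero]

lemma aux_pderiv_inr {N m : ℕ} (j : Fin m) (g : MvPolynomial (Fin (N + 1)) ℂ) :
    pderiv (Sum.inr j : Fin (N + 1) ⊕ Fin m) (rename Sum.inl g) = 0 := by
  induction g using MvPolynomial.induction_on with
  | C a => simp
  | add p q hp hq => simp [hp, hq]
  | mul_X p i hp => simp [hp, pderiv_X]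

lemma aux_pderiv_inl {N m : ℕ} (s : Fin (N + 1)) (g : MvPolynomial (Fin (N + 1)) ℂ) :
    pderiv (Sum.inl s : Fin (N + 1) ⊕ Fin m) (rename Sum.inl g) = rename Sum.inl (pderiv s g) := by
  exact pderiv_rename Sum.inl_injective s g

lemma aux_ker (N k1 k2 : ℕ)
    (f : Fin (k1 + k2) → MvPolynomial (Fin (N + 1)) ℂ)
    (hhom : ∀ j : Fin (k1 + k2), (f j).IsHomogeneous (if (j : ℕ) < k1 then 2 else 3)) :
    Ideal.span (Set.range fun s : Fin (N + 1) ⊕ Fin (k1 + k2) =>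
            pderiv s
              (∑ j : Fin (k1 + k2), X (Sum.inr j) * rename Sum.inl (f j))) ≤
      RingHom.ker (auxPi N k1 k2) := by
  rw [Ideal.span_le]
  rintro _ ⟨s, rfl⟩
  simp only [SetLike.mem_coe, RingHom.mem_ker, map_sum, Derivation.leibniz, smul_eq_mul, map_add,
    map_mul]
  refine Finset.sum_eq_zero fun j _ => ?_
  have h1 : auxPi N k1 k2 (rename Sum.inl (f j)) = 0 :=
    auxPi_inl N k1 k2 _ (by split_ifs <;> simp) _ (hhom j)
  rw [h1, zero_mul, add_zero]
  cases s with
  | inl s =>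
    rw [aux_pderiv_inl, auxPi_inl N k1 k2 _ _ _ (hhom j).pderiv, mul_zero]
    split_ifs <;> simp
  | inr i => rw [aux_pderiv_inr, map_zero, mul_zero]

lemma aux_weight (N k1 k2 : ℕ) (d : (Fin (N + 1) ⊕ Fin (k1 + k2)) →₀ ℕ) :
    Finsupp.weight (Sum.elim (fun _ : Fin (N + 1) => ((0 : ℤ), (1 : ℤ)))
            (fun j : Fin (k1 + k2) =>
              ((1 : ℤ), if (j : ℕ) < k1 then (-2 : ℤ) else (-3 : ℤ)))) d =
      (((∑ j : Fin k1, d (Sum.inr (Fin.castAdd k2 j)) : ℕ) : ℤ) +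
        ((∑ j : Fin k2, d (Sum.inr (Fin.natAdd k1 j)) : ℕ) : ℤ),
       ((∑ i, d (Sum.inl i) : ℕ) : ℤ) - 2 * ((∑ j : Fin k1, d (Sum.inr (Fin.castAdd k2 j)) : ℕ) : ℤ)
        - 3 * ((∑ j : Fin k2, d (Sum.inr (Fin.natAdd k1 j)) : ℕ) : ℤ)) := by
  rw [Finsupp.weight_apply, Finsupp.sum_fintype _ _ (by simp), Fintype.sum_sum_type,
    Fin.sum_univ_add (a := k1) (b := k2)]
  ext
  · simp [Prod.fst_sum, Prod.smul_fst]
  · simp [Prod.snd_sum, Finset.sum_neg_distrib, ← Finset.sum_mul]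
    ring

lemma aux_V (N k1 k2 p : ℕ) :
    weightedHomogeneousSubmodule ℂ
          (Sum.elim (fun _ : Fin (N + 1) => ((0 : ℤ), (1 : ℤ)))
            (fun j : Fin (k1 + k2) =>
              ((1 : ℤ), if (j : ℕ) < k1 then (-2 : ℤ) else (-3 : ℤ))))
          ((p : ℤ), -((3 * p : ℕ) : ℤ)) =
    (homogeneousSubmodule (Fin k2) ℂ p).map
      (rename (R := ℂ) (fun j : Fin k2 =>
        (Sum.inr (Fin.natAdd k1 j) : Fin (N + 1) ⊕ Fin (k1 + k2)))).toLinearMap := by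
  have hinj : Function.Injective (fun j : Fin k2 =>
        (Sum.inr (Fin.natAdd k1 j) : Fin (N + 1) ⊕ Fin (k1 + k2))) := by
    intro a b h
    simpa using h
  apply le_antisymm
  · intro v hv
    rw [mem_weightedHomogeneousSubmodule] at hv
    have key : ∀ d : (Fin (N + 1) ⊕ Fin (k1 + k2)) →₀ ℕ, coeff d v ≠ 0 →
        d.degree = p ∧ (∀ i, d (Sum.inl i) = 0) ∧
          ∀ j : Fin k1, d (Sum.inr (Fin.castAdd k2 j)) = 0 := by
      intro d hd
      have h := hv hd
      rw [aux_weight, Prod.mk.injEq] at h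
      rw [Finsupp.degree_eq_sum, Fintype.sum_sum_type, Fin.sum_univ_add (a := k1) (b := k2)]
      have h1 := h.1
      have h2 := h.2
      push_cast at h1 h2
      have hpos1 : 0 ≤ ∑ i, (d (Sum.inl i) : ℤ) := Finset.sum_nonneg fun i _ => by positivity
      have hpos2 : 0 ≤ ∑ j : Fin k1, (d (Sum.inr (Fin.castAdd k2 j)) : ℤ) :=
        Finset.sum_nonneg fun i _ => by positivity
      have e1 : ∑ i, d (Sum.inl i) = 0 := by zify; linarith [hpos1, hpos2]
      have e2 : ∑ j : Fin k1, d (Sum.inr (Fin.castAdd k2 j)) = 0 := by zify; linarith [hpos1, hpos2]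
      refine ⟨by zify at e1 e2 ⊢; linarith, fun i => ?_, fun j => ?_⟩
      · exact (Finset.sum_eq_zero_iff.1 e1) i (Finset.mem_univ _)
      · exact (Finset.sum_eq_zero_iff.1 e2) j (Finset.mem_univ _)
    obtain ⟨q, hq⟩ := exists_rename_eq_of_vars_subset_range v _ hinj (by
      intro x hx
      obtain ⟨d, hd, hxd⟩ := (mem_vars_iff_mem_support x).1 (by simpa using hx)
      obtain ⟨_, k1', k2'⟩ := key d (mem_support_iff.1 hd)
      rw [Finsupp.mem_support_iff] at hxd
      rcases x with i | j
      · exact absurd (k1' i) hxd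
      · induction j using Fin.addCases with
        | left j => exact absurd (k2' j) hxd
        | right j => exact ⟨j, rfl⟩)
    refine ⟨q, ?_, hq⟩
    rw [SetLike.mem_coe, mem_homogeneousSubmodule, ← IsHomogeneous.rename_isHomogeneous_iff hinj, hq]
    intro d hd
    rw [← (key d hd).1, Finsupp.degree_eq_weight_one]
    rfl
  · rintro _ ⟨q, hq, rfl⟩
    rw [SetLike.mem_coe, mem_homogeneousSubmodule] at hq
    rw [mem_weightedHomogeneousSubmodule]
    intro d hd
    obtain ⟨u, rfl, hu⟩ := coeff_rename_ne_zero _ _ _ hd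
    have h := hq hu
    replace h : u.degree = p := by rw [← h, Finsupp.degree_eq_weight_one]; rfl
    rw [Finsupp.weight, LinearMap.toAddMonoidHom_coe, Finsupp.linearCombination_mapDomain,
      Finsupp.linearCombination_apply, Finsupp.sum_fintype _ _ (by simp)]
    rw [Finsupp.degree_eq_sum] at h
    rw [← h]
    ext
    · simp [Prod.fst_sum]
    · simp [Prod.snd_sum, ← Finset.sum_mul]
      ring

/-- Lemma 3.7(iii), `r = 0` case: for a smooth complete intersection `X` of `k1 ≥ 0`
quadrics and `k2 ≥ 1` cubics in `ℙ^N` with `i_X = N + 1 - 2k1 - 3k2` positive and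
divisible by `3`, `p = i_X/3`, the primitive Hodge number `h^{p,n-p}_{pr}(X)`, computed
as `dim R_{p,-i_X}` of the bigraded Jacobian ring (Theorem 2.9), equals
`C((N-2k1-2)/3, k2-1)`; in particular it is `1` iff `k2 = 1`.
Here the degrees are `d_j = 2` for `j < k1` and `d_j = 3` otherwise, and smoothness is
expressed by the Jacobian criterion on the affine cone. -/
theorem stmt_14 (N k1 k2 : ℕ) (hk2 : 1 ≤ k2)
    (f : Fin (k1 + k2) → MvPolynomial (Fin (N + 1)) ℂ)
    (hhom : ∀ j : Fin (k1 + k2), (f j).IsHomogeneous (if (j : ℕ) < k1 then 2 else 3))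
    (hreg : RingTheory.Sequence.IsRegular (MvPolynomial (Fin (N + 1)) ℂ) (List.ofFn f))
    (hsmooth : ∀ x : Fin (N + 1) → ℂ, x ≠ 0 → (∀ j, eval x (f j) = 0) →
      (Matrix.of fun (j : Fin (k1 + k2)) (s : Fin (N + 1)) =>
        eval x (pderiv s (f j))).rank = k1 + k2)
    (hipos : 2 * k1 + 3 * k2 < N + 1)
    (hdvd : 3 ∣ (N + 1 - (2 * k1 + 3 * k2))) :
    Module.finrank ℂ
      (Submodule.map
        (Ideal.Quotient.mkₐ ℂ
          (Ideal.span (Set.range fun s : Fin (N + 1) ⊕ Fin (k1 + k2) =>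
            pderiv s
              (∑ j : Fin (k1 + k2), X (Sum.inr j) * rename Sum.inl (f j))))).toLinearMap
        (weightedHomogeneousSubmodule ℂ
          (Sum.elim (fun _ : Fin (N + 1) => ((0 : ℤ), (1 : ℤ)))
            (fun j : Fin (k1 + k2) =>
              ((1 : ℤ), if (j : ℕ) < k1 then (-2 : ℤ) else (-3 : ℤ))))
          ((((N + 1 - (2 * k1 + 3 * k2)) / 3 : ℕ) : ℤ),
            -((N + 1 - (2 * k1 + 3 * k2) : ℕ) : ℤ)))) =
      Nat.choose ((N - 2 * k1 - 2) / 3) (k2 - 1) ∧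
      (Nat.choose ((N - 2 * k1 - 2) / 3) (k2 - 1) = 1 ↔ k2 = 1) := by
  obtain ⟨p, hp⟩ := hdvd
  have hp' : (N + 1 - (2 * k1 + 3 * k2)) / 3 = p := by omega
  have hc : (N - 2 * k1 - 2) / 3 = p + k2 - 1 := by omega
  rw [hp', hp, hc]
  constructor
  · rw [aux_V, ← Submodule.map_comp, ← aux_finrank k2 p hk2]
    have hJ := aux_ker N k1 k2 f hhom
    symm
    refine (Submodule.equivMapOfInjective _ ?_ _).finrank_eq
    refine (injective_iff_map_eq_zero _).2 fun q hq => ?_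
    have h1 := hJ (Ideal.Quotient.eq_zero_iff_mem.1 hq)
    rw [RingHom.mem_ker] at h1
    have h2 : (auxPi N k1 k2).comp (rename (fun j : Fin k2 =>
        (Sum.inr (Fin.natAdd k1 j) : Fin (N + 1) ⊕ Fin (k1 + k2)))) = AlgHom.id ℂ _ := by
      ext1 j
      simp [auxPi]
    exact (DFunLike.congr_fun h2 q).symm.trans h1
  · rw [Nat.choose_eq_one_iff]
    omega
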